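/- Let 𝔥 ⊆ so(n) be a weak Berger algebra. Then each of the algebras ℝ·id ⊕ 𝔤^{1,𝔥}, ℝ·id ⊕ 𝔤^{2,𝔥}, ℝ·id ⊕ 𝔤^{3,𝔥,φ}, 𝔤^{α,θ,1,𝔥}, 𝔤^{θ,2,𝔥}, 𝔤^{θ,3,𝔥,φ} (with parameters α, θ, φ as in their definitions, and with z(𝔥) ≠ 0 whenever a nonzero φ is required) is a weakly irreducible Berger subalgebra of co(1,n+1) that is not contained in so(1,n+1). -/

import Mathlib

open Module

noncomputable section

namespace Weyl

variable {V : Type*} [AddCommGroup V] [Module ℝ V]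

/-- The endomorphism `X ∧ Y : Z ↦ B(X,Z)•Y − B(Y,Z)•X`. -/
def wedge (B : LinearMap.BilinForm ℝ V) (X Y : V) : Module.End ℝ V where
  toFun Z := B X Z • Y - B Y Z • X
  map_add' z z' := by simp only [map_add, add_smul]; abel
  map_smul' c z := by simp only [map_smul, smul_eq_mul, RingHom.id_apply, mul_smul, smul_sub]

/-- The Lie algebra `so(B)` of endomorphisms skew-symmetric with respect to `B`. -/
def soSet (B : LinearMap.BilinForm ℝ V) : Set (Module.End ℝ V) :=
  {A | ∀ x y, B (A x) y + B x (A y) = 0}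

/-- The conformal Lie algebra `co(B) = ℝ·id ⊕ so(B)`. -/
def coSet (B : LinearMap.BilinForm ℝ V) : Set (Module.End ℝ V) :=
  {F | ∃ c : ℝ, ∃ S ∈ soSet B, F = c • (1 : Module.End ℝ V) + S}

/-- The first prolongation `g^{(1)}` of a set of endomorphisms:
linear maps `φ : V → g` with `φ(X)Y = φ(Y)X`. -/
def firstProlong (g : Set (Module.End ℝ V)) : Set (V →ₗ[ℝ] Module.End ℝ V) :=
  {φ | (∀ x, φ x ∈ g) ∧ ∀ x y, φ x y = φ y x}

/-- `R` is an algebraic curvature tensor of type `g` (a linear map on `Λ²V`,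
encoded as an antisymmetric bilinear map, with values in `g`, satisfying the
Bianchi identity). -/
def IsCurv (g : Set (Module.End ℝ V)) (R : V →ₗ[ℝ] V →ₗ[ℝ] Module.End ℝ V) : Prop :=
  (∀ x y, R x y = - R y x) ∧ (∀ x y, R x y ∈ g) ∧
    ∀ x y z, R x y z + R y z x + R z x y = 0

/-- `L(ℛ(g))`: the span of all values of algebraic curvature tensors of type `g`. -/
def curvSpan (g : Set (Module.End ℝ V)) : Submodule ℝ (Module.End ℝ V) :=
  Submodule.span ℝ {F | ∃ R, IsCurv g R ∧ ∃ x y, F = R x y}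

/-- `g` is a Berger algebra: `L(ℛ(g)) = g`. -/
def IsBerger (g : Set (Module.End ℝ V)) : Prop :=
  (curvSpan g : Set (Module.End ℝ V)) = g

/-- `g` is (the underlying set of) a Lie subalgebra of `gl(V)`. -/
def IsLieSub (g : Set (Module.End ℝ V)) : Prop :=
  (0 : Module.End ℝ V) ∈ g ∧ (∀ F ∈ g, ∀ F' ∈ g, F + F' ∈ g) ∧
    (∀ (c : ℝ), ∀ F ∈ g, c • F ∈ g) ∧ ∀ F ∈ g, ∀ F' ∈ g, F * F' - F' * F ∈ g

/-- The subspace `W` is invariant under every element of `g`. -/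
def Invariant (g : Set (Module.End ℝ V)) (W : Submodule ℝ V) : Prop :=
  ∀ F ∈ g, ∀ x ∈ W, F x ∈ W

/-- The restriction of `B` to `W` is nondegenerate. -/
def IsNondegOn (B : LinearMap.BilinForm ℝ V) (W : Submodule ℝ V) : Prop :=
  ∀ x ∈ W, (∀ y ∈ W, B x y = 0) → x = 0

/-- Weak irreducibility: no proper nonzero invariant nondegenerate subspace. -/
def WeaklyIrred (B : LinearMap.BilinForm ℝ V) (g : Set (Module.End ℝ V)) : Prop :=
  ∀ W : Submodule ℝ V, Invariant g W → IsNondegOn B W → W = ⊥ ∨ W = ⊤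

/-- Irreducibility: no proper nonzero invariant subspace. -/
def Irred (g : Set (Module.End ℝ V)) : Prop :=
  ∀ W : Submodule ℝ V, Invariant g W → W = ⊥ ∨ W = ⊤

/-- The Euclidean dot product on `Fin n → ℝ`. -/
def dotE (n : ℕ) : LinearMap.BilinForm ℝ (Fin n → ℝ) :=
  LinearMap.mk₂ ℝ (fun x y => ∑ i, x i * y i)
    (fun x x' y => by simp [add_mul, Finset.sum_add_distrib])
    (fun c x y => by simp [Finset.mul_sum, mul_assoc])
    (fun x y y' => by simp [mul_add, Finset.sum_add_distrib])
    (fun c x y => by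
      simp only [Pi.smul_apply, smul_eq_mul, Finset.mul_sum]
      exact Finset.sum_congr rfl fun i _ => by ring)

/-- Minkowski space `ℝ^{1,n+1}` in Witt coordinates: the vector `(v, x, u)`
represents `v·p + x + u·q` with respect to a Witt basis `p, e₁, …, eₙ, q`. -/
abbrev Mink (n : ℕ) := ℝ × (Fin n → ℝ) × ℝ

/-- The Minkowski metric in Witt coordinates: `p, q` are isotropic, `(p,q) = 1`,
and the form is the Euclidean one on the `ℝⁿ`-part orthogonal to `p` and `q`. -/
def minkB (n : ℕ) : LinearMap.BilinForm ℝ (Mink n) :=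
  LinearMap.mk₂ ℝ (fun X Y => X.1 * Y.2.2 + X.2.2 * Y.1 + dotE n X.2.1 Y.2.1)
    (fun X X' Y => by
      simp only [Prod.fst_add, Prod.snd_add, Pi.add_apply, map_add,
        LinearMap.add_apply]
      ring)
    (fun c X Y => by
      simp only [Prod.smul_fst, Prod.smul_snd, smul_eq_mul, map_smul,
        LinearMap.smul_apply]
      ring)
    (fun X Y Y' => by
      simp only [Prod.fst_add, Prod.snd_add, Pi.add_apply, map_add,
        LinearMap.add_apply]
      ring)
    (fun c X Y => by
      simp only [Prod.smul_fst, Prod.smul_snd, smul_eq_mul, map_smul,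
        LinearMap.smul_apply]
      ring)

/-- The Witt basis vector `p`. -/
def pvec (n : ℕ) : Mink n := (1, 0, 0)

/-- The Witt basis vector `q`. -/
def qvec (n : ℕ) : Mink n := (0, 0, 1)

/-- The embedding of `ℝⁿ` into Minkowski space. -/
def emb {n : ℕ} (x : Fin n → ℝ) : Mink n := (0, x, 0)

/-- The element `(b, a, A, X) = b·id + (a, A, X)` of `co(1,n+1)_{ℝp}`:
it maps `p ↦ (a+b)·p`, `U ↦ (X,U)·p + A U + b·U` for `U ∈ ℝⁿ`, and
`q ↦ −X + (b−a)·q`. -/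
def coElem {n : ℕ} (b a : ℝ) (A : Module.End ℝ (Fin n → ℝ)) (X : Fin n → ℝ) :
    Module.End ℝ (Mink n) where
  toFun w := ((b + a) * w.1 + dotE n X w.2.1,
              b • w.2.1 + A w.2.1 - w.2.2 • X,
              (b - a) * w.2.2)
  map_add' w w' := by
    simp only [Prod.fst_add, Prod.snd_add, map_add, Prod.mk_add_mk, add_smul]
    refine Prod.ext (by ring) (Prod.ext ?_ (by ring))
    simp only [smul_add]
    abel
  map_smul' c w := by
    simp only [Prod.smul_fst, Prod.smul_snd, smul_eq_mul, map_smul,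
      RingHom.id_apply, Prod.smul_mk]
    refine Prod.ext (by simp; ring) (Prod.ext ?_ (by simp; ring))
    simp only [smul_smul, smul_sub, LinearMap.map_smul]
    rw [mul_comm]
    module

/-- The Lie algebra `so(n)` of skew-symmetric endomorphisms of Euclidean `ℝⁿ`. -/
def soE (n : ℕ) : Set (Module.End ℝ (Fin n → ℝ)) := soSet (dotE n)

/-- The subalgebra `co(1,n+1)_{ℝp}` of `co(1,n+1)` preserving the isotropic line `ℝp`,
whose elements are written `(b, a, A, X)`. -/
def coRp (n : ℕ) : Set (Module.End ℝ (Mink n)) :=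
  {F | ∃ b a : ℝ, ∃ A ∈ soE n, ∃ X : Fin n → ℝ, F = coElem b a A X}

/-- `P` is a weak curvature tensor of type `h ⊆ so(n)`. -/
def IsWeakCurv (n : ℕ) (h : Set (Module.End ℝ (Fin n → ℝ)))
    (P : (Fin n → ℝ) →ₗ[ℝ] Module.End ℝ (Fin n → ℝ)) : Prop :=
  (∀ x, P x ∈ h) ∧
    ∀ x y z, dotE n (P x y) z + dotE n (P y z) x + dotE n (P z x) y = 0

/-- The span of all values of weak curvature tensors of type `h`. -/
def weakSpan (n : ℕ) (h : Set (Module.End ℝ (Fin n → ℝ))) :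
    Submodule ℝ (Module.End ℝ (Fin n → ℝ)) :=
  Submodule.span ℝ {A | ∃ P, IsWeakCurv n h P ∧ ∃ U, A = P U}

/-- `h ⊆ so(n)` is a weak Berger algebra (equivalently, by Leistner's theorem,
the holonomy algebra of a Riemannian manifold). -/
def IsWeakBerger (n : ℕ) (h : Set (Module.End ℝ (Fin n → ℝ))) : Prop :=
  (weakSpan n h : Set (Module.End ℝ (Fin n → ℝ))) = h

/-- The linear map `θ` vanishes on the commutant `[h, h]`. -/
def VanishOnComm {n : ℕ} (h : Set (Module.End ℝ (Fin n → ℝ)))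
    (θ : Module.End ℝ (Fin n → ℝ) →ₗ[ℝ] ℝ) : Prop :=
  ∀ A ∈ h, ∀ B ∈ h, θ (A * B - B * A) = 0

/-- The linear map `θ` is nonzero on `h`. -/
def NonzeroOn {n : ℕ} (h : Set (Module.End ℝ (Fin n → ℝ)))
    (θ : Module.End ℝ (Fin n → ℝ) →ₗ[ℝ] ℝ) : Prop :=
  ∃ A ∈ h, θ A ≠ 0

/-- `ℝ·id ⊕ 𝔤^{1,𝔥}`. -/
def G1 (n : ℕ) (h : Set (Module.End ℝ (Fin n → ℝ))) : Set (Module.End ℝ (Mink n)) :=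
  {F | ∃ b a : ℝ, ∃ A ∈ h, ∃ X : Fin n → ℝ, F = coElem b a A X}

/-- `ℝ·id ⊕ 𝔤^{2,𝔥}`. -/
def G2 (n : ℕ) (h : Set (Module.End ℝ (Fin n → ℝ))) : Set (Module.End ℝ (Mink n)) :=
  {F | ∃ b : ℝ, ∃ A ∈ h, ∃ X : Fin n → ℝ, F = coElem b 0 A X}

/-- `ℝ·id ⊕ 𝔤^{3,𝔥,φ}`. -/
def G3 (n : ℕ) (h : Set (Module.End ℝ (Fin n → ℝ)))
    (φ : Module.End ℝ (Fin n → ℝ) →ₗ[ℝ] ℝ) : Set (Module.End ℝ (Mink n)) :=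
  {F | ∃ b : ℝ, ∃ A ∈ h, ∃ X : Fin n → ℝ, F = coElem b (φ A) A X}

/-- `𝔤^{α,θ,1,𝔥}`. -/
def G4 (n : ℕ) (h : Set (Module.End ℝ (Fin n → ℝ))) (α : ℝ)
    (θ : Module.End ℝ (Fin n → ℝ) →ₗ[ℝ] ℝ) : Set (Module.End ℝ (Mink n)) :=
  {F | ∃ a : ℝ, ∃ A ∈ h, ∃ X : Fin n → ℝ, F = coElem (α * a + θ A) a A X}

/-- `𝔤^{θ,2,𝔥}`. -/
def G5 (n : ℕ) (h : Set (Module.End ℝ (Fin n → ℝ)))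
    (θ : Module.End ℝ (Fin n → ℝ) →ₗ[ℝ] ℝ) : Set (Module.End ℝ (Mink n)) :=
  {F | ∃ A ∈ h, ∃ X : Fin n → ℝ, F = coElem (θ A) 0 A X}

/-- `𝔤^{θ,3,𝔥,φ}`. -/
def G6 (n : ℕ) (h : Set (Module.End ℝ (Fin n → ℝ)))
    (θ φ : Module.End ℝ (Fin n → ℝ) →ₗ[ℝ] ℝ) : Set (Module.End ℝ (Mink n)) :=
  {F | ∃ A ∈ h, ∃ X : Fin n → ℝ, F = coElem (θ A) (φ A) A X}

/-- The center of `𝔥` is nonzero. -/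
def CenterNonzero {n : ℕ} (h : Set (Module.End ℝ (Fin n → ℝ))) : Prop :=
  ∃ A ∈ h, A ≠ 0 ∧ ∀ B ∈ h, A * B = B * A

/-- `G` is a weakly irreducible Berger subalgebra of `co(1,n+1)` not contained
in `so(1,n+1)`. -/
def GoodAlg (n : ℕ) (G : Set (Module.End ℝ (Mink n))) : Prop :=
  G ⊆ coSet (minkB n) ∧ IsLieSub G ∧ WeaklyIrred (minkB n) G ∧
    ¬ G ⊆ soSet (minkB n) ∧ IsBerger G

theorem coElem_apply {n : ℕ} (b a : ℝ) (A : Module.End ℝ (Fin n → ℝ)) (X : Fin n → ℝ)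
    (w : Mink n) : coElem b a A X w = ((b + a) * w.1 + dotE n X w.2.1,
              b • w.2.1 + A w.2.1 - w.2.2 • X, (b - a) * w.2.2) := rfl

theorem minkB_apply {n : ℕ} (X Y : Mink n) :
    minkB n X Y = X.1 * Y.2.2 + X.2.2 * Y.1 + dotE n X.2.1 Y.2.1 := rfl

theorem dotE_apply {n : ℕ} (x y : Fin n → ℝ) : dotE n x y = ∑ i, x i * y i := rfl

theorem dotE_comm {n : ℕ} (x y : Fin n → ℝ) : dotE n x y = dotE n y x := by
  simp only [dotE_apply, mul_comm]

theorem dotE_self_pos {n : ℕ} {x : Fin n → ℝ} (hx : x ≠ 0) : dotE n x x ≠ 0 := by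
  intro h0
  apply hx
  rw [dotE_apply, Finset.sum_eq_zero_iff_of_nonneg (fun i _ => mul_self_nonneg _)] at h0
  ext i
  simpa using h0 i (Finset.mem_univ i)

theorem coElem_add {n : ℕ} (b a b' a' : ℝ) (A A' : Module.End ℝ (Fin n → ℝ))
    (X X' : Fin n → ℝ) :
    coElem b a A X + coElem b' a' A' X' = coElem (b + b') (a + a') (A + A') (X + X') := by
  refine LinearMap.ext fun w => ?_
  simp only [LinearMap.add_apply, coElem_apply, map_add, Prod.mk_add_mk]
  refine Prod.ext (by simp only []; ring) (Prod.ext ?_ (by simp only []; ring))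
  simp only []
  module

theorem coElem_smul {n : ℕ} (c b a : ℝ) (A : Module.End ℝ (Fin n → ℝ)) (X : Fin n → ℝ) :
    c • coElem b a A X = coElem (c * b) (c * a) (c • A) (c • X) := by
  refine LinearMap.ext fun w => ?_
  simp only [LinearMap.smul_apply, coElem_apply, map_smul, Prod.smul_mk, smul_eq_mul]
  refine Prod.ext (by simp only []; ring) (Prod.ext ?_ (by simp only []; ring))
  simp only []
  module

theorem coElem_congr {n : ℕ} {b a b' a' : ℝ} {A A' : Module.End ℝ (Fin n → ℝ)}
    {X X' : Fin n → ℝ} (h1 : b = b') (h2 : a = a') (h3 : A = A') (h4 : X = X') :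
    coElem b a A X = coElem b' a' A' X' := by
  rw [h1, h2, h3, h4]

theorem coElem_neg {n : ℕ} (b a : ℝ) (A : Module.End ℝ (Fin n → ℝ)) (X : Fin n → ℝ) :
    -coElem b a A X = coElem (-b) (-a) (-A) (-X) := by
  rw [← neg_one_smul ℝ, coElem_smul]
  exact coElem_congr (by ring) (by ring) (by module) (by module)

theorem coElem_skew {n : ℕ} (b a : ℝ) {A : Module.End ℝ (Fin n → ℝ)} (hA : A ∈ soE n)
    (X : Fin n → ℝ) (x y : Mink n) :
    minkB n (coElem b a A X x) y + minkB n x (coElem b a A X y) = 2 * b * minkB n x y := by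
  have h1 := hA x.2.1 y.2.1
  simp only [minkB_apply, coElem_apply, map_add, map_sub, map_smul, LinearMap.add_apply,
    LinearMap.sub_apply, LinearMap.smul_apply, smul_eq_mul]
  rw [dotE_comm x.2.1 X]
  linear_combination h1

theorem coElem_bracket {n : ℕ} (b a b' a' : ℝ) {A A' : Module.End ℝ (Fin n → ℝ)}
    (hA : A ∈ soE n) (hA' : A' ∈ soE n) (X X' : Fin n → ℝ) :
    coElem b a A X * coElem b' a' A' X' - coElem b' a' A' X' * coElem b a A X =
      coElem 0 0 (A * A' - A' * A) (a • X' + A X' - a' • X - A' X) := by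
  refine LinearMap.ext fun w => ?_
  have h1 := hA X' w.2.1
  have h2 := hA' X w.2.1
  simp only [LinearMap.sub_apply, Module.End.mul_apply, coElem_apply, map_add, map_sub, map_smul,
    LinearMap.add_apply, LinearMap.smul_apply, smul_eq_mul, Prod.mk_sub_mk]
  refine Prod.ext ?_ (Prod.ext ?_ (by simp only []; ring))
  · simp only []
    rw [dotE_comm X' X]
    linear_combination h2 - h1
  · simp only []
    module

/-- The common form of all six families. -/
def GG (n : ℕ) (h : Set (Module.End ℝ (Fin n → ℝ))) (K : Submodule ℝ (ℝ × ℝ))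
    (θ φ : Module.End ℝ (Fin n → ℝ) →ₗ[ℝ] ℝ) : Set (Module.End ℝ (Mink n)) :=
  {F | ∃ k ∈ K, ∃ A ∈ h, ∃ X : Fin n → ℝ, F = coElem (θ A + k.1) (φ A + k.2) A X}

section
variable {n : ℕ} (P : (Fin n → ℝ) →ₗ[ℝ] Module.End ℝ (Fin n → ℝ))
  (β γ : (Fin n → ℝ) →ₗ[ℝ] ℝ) (t : ℝ)

/-- The vector representing the linear form `β + γ`. -/
def zvec : Fin n → ℝ := fun i => β (Pi.single i 1) + γ (Pi.single i 1)

theorem dotE_zvec (U : Fin n → ℝ) : dotE n (zvec β γ) U = β U + γ U := by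
  have h1 := LinearMap.pi_apply_eq_sum_univ (β + γ) U
  simp only [LinearMap.add_apply, smul_eq_mul] at h1
  rw [h1, dotE_apply]
  refine Finset.sum_congr rfl fun i _ => ?_
  have : (fun j => if i = j then (1 : ℝ) else 0) = Pi.single i 1 := by
    ext j
    simp [Pi.single_apply, eq_comm]
  rw [this, zvec]
  ring

/-- The curvature tensor as a function. -/
def curvFun (x y : Mink n) : Module.End ℝ (Mink n) :=
  coElem (β (y.2.2 • x.2.1 - x.2.2 • y.2.1)) (γ (y.2.2 • x.2.1 - x.2.2 • y.2.1))
    (P (y.2.2 • x.2.1 - x.2.2 • y.2.1))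
    (t • (y.2.2 • x.2.1 - x.2.2 • y.2.1) +
      (β y.2.1 • x.2.1 - β x.2.1 • y.2.1 + P y.2.1 x.2.1 - P x.2.1 y.2.1) +
      (x.1 * y.2.2 - x.2.2 * y.1) • zvec β γ)

/-- The curvature tensor as a bilinear map. -/
def curvMap : Mink n →ₗ[ℝ] Mink n →ₗ[ℝ] Module.End ℝ (Mink n) :=
  LinearMap.mk₂ ℝ (curvFun P β γ t)
    (fun x x' y => by
      simp only [curvFun, coElem_add, Prod.fst_add, Prod.snd_add, map_add, map_sub, map_smul,
        smul_eq_mul, LinearMap.add_apply]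
      refine coElem_congr (by ring) (by ring) (by module) (by module))
    (fun c x y => by
      simp only [curvFun, coElem_smul, Prod.smul_fst, Prod.smul_snd, map_sub, map_smul,
        smul_eq_mul, LinearMap.smul_apply]
      refine coElem_congr (by ring) (by ring) (by module) (by module))
    (fun x y y' => by
      simp only [curvFun, coElem_add, Prod.fst_add, Prod.snd_add, map_add, map_sub, map_smul,
        smul_eq_mul, LinearMap.add_apply]
      refine coElem_congr (by ring) (by ring) (by module) (by module))
    (fun c x y => by
      simp only [curvFun, coElem_smul, Prod.smul_fst, Prod.smul_snd, map_sub, map_smul,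
        smul_eq_mul, LinearMap.smul_apply]
      refine coElem_congr (by ring) (by ring) (by module) (by module))

theorem curvMap_apply (x y : Mink n) : curvMap P β γ t x y = curvFun P β γ t x y := rfl

theorem curv_bianchi (hP : ∀ x, P x ∈ soE n)
    (hB : ∀ x y z, dotE n (P x y) z + dotE n (P y z) x + dotE n (P z x) y = 0)
    (x y z : Mink n) : curvMap P β γ t x y z + curvMap P β γ t y z x
      + curvMap P β γ t z x y = 0 := by
  simp only [curvMap_apply, curvFun, coElem_apply, map_add, map_sub, map_smul,
    LinearMap.add_apply, LinearMap.sub_apply, LinearMap.smul_apply, smul_eq_mul,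
    Prod.mk_add_mk, dotE_zvec]
  refine Prod.ext ?_ (Prod.ext ?_ ?_)
  · have h1 := hB x.2.1 y.2.1 z.2.1
    have s1 := hP x.2.1 y.2.1 z.2.1
    have s2 := hP y.2.1 z.2.1 x.2.1
    have s3 := hP z.2.1 x.2.1 y.2.1
    rw [dotE_comm y.2.1] at s1
    rw [dotE_comm z.2.1] at s2
    rw [dotE_comm x.2.1] at s3
    simp only [Prod.fst_zero]
    rw [dotE_comm y.2.1 x.2.1, dotE_comm z.2.1 x.2.1, dotE_comm z.2.1 y.2.1]
    linear_combination s1 + s2 + s3 - 2 * h1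
  · simp only [Prod.fst_zero, Prod.snd_zero]
    module
  · simp only [Prod.snd_zero]
    ring

theorem curv_isCurv {g : Set (Module.End ℝ (Mink n))} (hP : ∀ x, P x ∈ soE n)
    (hB : ∀ x y z, dotE n (P x y) z + dotE n (P y z) x + dotE n (P z x) y = 0)
    (hg : ∀ U X, coElem (β U) (γ U) (P U) X ∈ g) : IsCurv g (curvMap P β γ t) := by
  refine ⟨fun x y => ?_, fun x y => hg _ _, curv_bianchi P β γ t hP hB⟩
  simp only [curvMap_apply, curvFun, coElem_neg, map_sub, map_smul, smul_eq_mul]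
  exact coElem_congr (by ring) (by ring) (by module) (by module)

theorem curv_mem {g : Set (Module.End ℝ (Mink n))} (hP : ∀ x, P x ∈ soE n)
    (hB : ∀ x y z, dotE n (P x y) z + dotE n (P y z) x + dotE n (P z x) y = 0)
    (hg : ∀ U X, coElem (β U) (γ U) (P U) X ∈ g) (U : Fin n → ℝ) :
    coElem (β U) (γ U) (P U) (t • U) ∈ curvSpan g := by
  refine Submodule.subset_span ⟨_, curv_isCurv P β γ t hP hB hg, emb U, qvec n, ?_⟩
  simp only [curvMap_apply, curvFun, emb, qvec]
  exact coElem_congr (by simp) (by simp) (by simp) (by simp)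

end

theorem GG_lie {n : ℕ} {h : Set (Module.End ℝ (Fin n → ℝ))} (hsub : IsLieSub h)
    (hso : h ⊆ soE n) (K : Submodule ℝ (ℝ × ℝ)) {θ φ : Module.End ℝ (Fin n → ℝ) →ₗ[ℝ] ℝ}
    (hθ : VanishOnComm h θ) (hφ : VanishOnComm h φ) : IsLieSub (GG n h K θ φ) := by
  obtain ⟨h0, hadd, hsm, hbr⟩ := hsub
  refine ⟨⟨0, K.zero_mem, 0, h0, 0, ?_⟩, ?_, ?_, ?_⟩
  · refine LinearMap.ext fun w => ?_
    simp [coElem_apply]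
    rfl
  · rintro _ ⟨k, hk, A, hA, X, rfl⟩ _ ⟨k', hk', A', hA', X', rfl⟩
    refine ⟨k + k', K.add_mem hk hk', A + A', hadd _ hA _ hA', X + X', ?_⟩
    rw [coElem_add]
    exact coElem_congr (by simp; ring) (by simp; ring) rfl rfl
  · rintro c _ ⟨k, hk, A, hA, X, rfl⟩
    refine ⟨c • k, K.smul_mem c hk, c • A, hsm c _ hA, c • X, ?_⟩
    rw [coElem_smul]
    exact coElem_congr (by simp; ring) (by simp; ring) rfl rfl
  · rintro _ ⟨k, hk, A, hA, X, rfl⟩ _ ⟨k', hk', A', hA', X', rfl⟩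
    rw [coElem_bracket _ _ _ _ (hso hA) (hso hA')]
    refine ⟨0, K.zero_mem, _, hbr _ hA _ hA', _, coElem_congr ?_ ?_ rfl rfl⟩
    · rw [hθ _ hA _ hA']; simp
    · rw [hφ _ hA _ hA']; simp

theorem weaklyIrred_of {n : ℕ} (hn : 1 ≤ n) {G : Set (Module.End ℝ (Mink n))}
    (hG : ∀ X, coElem 0 0 0 X ∈ G) : WeaklyIrred (minkB n) G := by
  intro W hW hN
  have act : ∀ X : Fin n → ℝ, ∀ w ∈ W, ((dotE n X w.2.1, -(w.2.2 • X), 0) : Mink n) ∈ W := by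
    intro X w hw
    have := hW _ (hG X) w hw
    simpa [coElem_apply] using this
  have key : ∀ w ∈ W, w.2.2 ≠ 0 → W = ⊤ := by
    intro w hw hu
    have e0 : (fun _ => 1 : Fin n → ℝ) ≠ 0 := fun h0 => by
      have := congrFun h0 ⟨0, hn⟩
      simp at this
    have hp : ((1, 0, 0) : Mink n) ∈ W := by
      have h2 := act (fun _ => 1) _ (act (fun _ => 1) w hw)
      have h3 := W.smul_mem (-(w.2.2 * dotE n (fun _ => 1) (fun _ => 1)))⁻¹ h2
      have hne := mul_ne_zero hu (dotE_self_pos e0)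
      convert h3 using 1
      refine Prod.ext ?_ (Prod.ext ?_ ?_)
      · simp only [map_neg, map_smul, smul_eq_mul, Prod.smul_mk]
        rw [inv_mul_cancel₀ (neg_ne_zero.mpr hne)]
      · simp
      · simp
    have hE : ∀ X : Fin n → ℝ, ((0, X, 0) : Mink n) ∈ W := by
      intro X
      have h2 := W.smul_mem (-(w.2.2)⁻¹) (W.sub_mem (act X w hw)
        (W.smul_mem (dotE n X w.2.1) hp))
      convert h2 using 1
      refine Prod.ext ?_ (Prod.ext ?_ ?_)
      · simp
      · simp [smul_smul, inv_mul_cancel₀ hu]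
      · simp
    have hq : ((0, 0, 1) : Mink n) ∈ W := by
      have h2 := W.smul_mem (w.2.2)⁻¹ (W.sub_mem (W.sub_mem hw (W.smul_mem w.1 hp)) (hE w.2.1))
      convert h2 using 1
      refine Prod.ext ?_ (Prod.ext ?_ ?_)
      · simp
      · simp
      · simp [inv_mul_cancel₀ hu]
    rw [eq_top_iff]
    intro v _
    have h2 := W.add_mem (W.add_mem (W.smul_mem v.1 hp) (hE v.2.1)) (W.smul_mem v.2.2 hq)
    convert h2 using 1
    refine Prod.ext ?_ (Prod.ext ?_ ?_) <;> simp
  by_cases hu : ∃ w ∈ W, w.2.2 ≠ 0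
  · obtain ⟨w, hw, hu⟩ := hu
    exact Or.inr (key w hw hu)
  · push Not at hu
    left
    have hx : ∀ w ∈ W, w.2.1 = 0 := by
      intro w hw
      by_contra hx
      have h1 := act w.2.1 w hw
      have h2 := hN _ h1 (fun y hy => by
        simp [minkB_apply, hu y hy, hu w hw])
      exact dotE_self_pos hx (congrArg Prod.fst h2)
    rw [eq_bot_iff]
    intro w hw
    have := hN w hw (fun y hy => by
      simp [minkB_apply, hu y hy, hu w hw, hx y hy])
    simpa using this

theorem GG_good {n : ℕ} (hn : 1 ≤ n) {h : Set (Module.End ℝ (Fin n → ℝ))} (hsub : IsLieSub h)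
    (hso : h ⊆ soE n) (hwb : IsWeakBerger n h)
    (K : Submodule ℝ (ℝ × ℝ)) {θ φ : Module.End ℝ (Fin n → ℝ) →ₗ[ℝ] ℝ}
    (hθ : VanishOnComm h θ) (hφ : VanishOnComm h φ)
    (hne : ∃ k ∈ K, ∃ A ∈ h, θ A + k.1 ≠ 0) : GoodAlg n (GG n h K θ φ) := by
  have hlie := GG_lie hsub hso K hθ hφ
  have h0 := hsub.1
  refine ⟨?_, hlie, weaklyIrred_of hn fun X => ⟨0, K.zero_mem, 0, h0, X, by simp⟩, ?_, ?_⟩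
  · rintro _ ⟨k, hk, A, hA, X, rfl⟩
    refine ⟨θ A + k.1, coElem 0 (φ A + k.2) A X, fun x y => ?_, ?_⟩
    · rw [coElem_skew _ _ (hso hA)]; ring
    · refine LinearMap.ext fun w => ?_
      simp only [coElem_apply, LinearMap.add_apply, LinearMap.smul_apply, Module.End.one_apply]
      refine Prod.ext ?_ (Prod.ext ?_ ?_)
      · simp; ring
      · simp; module
      · simp; ring
  · obtain ⟨k, hk, A, hA, hb⟩ := hne
    intro hss
    have h1 := hss (⟨k, hk, A, hA, 0, rfl⟩ : coElem (θ A + k.1) (φ A + k.2) A 0 ∈ GG n h K θ φ)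
      (pvec n) (qvec n)
    rw [coElem_skew _ _ (hso hA)] at h1
    apply hb
    simpa [minkB_apply, pvec, qvec] using h1
  · apply Set.Subset.antisymm
    · intro F hF
      refine Submodule.span_induction (p := fun F _ => F ∈ GG n h K θ φ) ?_ hlie.1
        (fun x y _ _ hx hy => hlie.2.1 x hx y hy) (fun c x _ hx => hlie.2.2.1 c x hx) hF
      rintro _ ⟨R, hR, x, y, rfl⟩
      exact hR.2.1 x y
    · rintro _ ⟨k, hk, A, hA, X, rfl⟩
      have hz : ∀ x : Fin n → ℝ, (0 : (Fin n → ℝ) →ₗ[ℝ] Module.End ℝ (Fin n → ℝ)) x ∈ soE n :=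
        fun x => hso h0
      have hX : coElem 0 0 0 X ∈ curvSpan (GG n h K θ φ) := by
        have := curv_mem (g := GG n h K θ φ) (0 : (Fin n → ℝ) →ₗ[ℝ] Module.End ℝ (Fin n → ℝ))
          0 0 1 hz (by simp) (fun U X => ⟨0, K.zero_mem, 0, h0, X, by simp⟩) X
        simpa using this
      have hk' : coElem k.1 k.2 0 0 ∈ curvSpan (GG n h K θ φ) := by
        have := curv_mem (g := GG n h K θ φ) (0 : (Fin n → ℝ) →ₗ[ℝ] Module.End ℝ (Fin n → ℝ))
          (k.1 • LinearMap.proj ⟨0, hn⟩) (k.2 • LinearMap.proj ⟨0, hn⟩) 0 hz (by simp)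
          (fun U X => ⟨U ⟨0, hn⟩ • k, K.smul_mem _ hk, 0, h0, X, by simp [mul_comm]⟩)
          (fun _ => 1)
        simpa using this
      have hA' : coElem (θ A) (φ A) A 0 ∈ curvSpan (GG n h K θ φ) := by
        have hAs : A ∈ weakSpan n h := by
          rw [IsWeakBerger] at hwb
          rw [← SetLike.mem_coe, hwb]
          exact hA
        refine Submodule.span_induction
          (p := fun A _ => coElem (θ A) (φ A) A 0 ∈ curvSpan (GG n h K θ φ)) ?_ ?_ ?_ ?_ hAs
        · rintro _ ⟨P, hP, U, rfl⟩
          have := curv_mem (g := GG n h K θ φ) P (θ ∘ₗ P) (φ ∘ₗ P) 0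
            (fun x => hso (hP.1 x)) hP.2
            (fun U X => ⟨0, K.zero_mem, P U, hP.1 U, X, by simp⟩) U
          simpa using this
        · convert (curvSpan (GG n h K θ φ)).zero_mem using 1
          refine LinearMap.ext fun w => ?_
          simp [coElem_apply]
        · intro x y _ _ hx hy
          have := Submodule.add_mem _ hx hy
          rw [coElem_add] at this
          simpa using this
        · intro c x _ hx
          have := Submodule.smul_mem _ c hx
          rw [coElem_smul] at this
          simpa using this
      have := Submodule.add_mem _ (Submodule.add_mem _ hA' hk') hX
      rw [coElem_add, coElem_add] at this
      simpa using this

/-- For every weak Berger algebra `𝔥 ⊆ so(n)`, each of the six algebras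
`ℝ·id ⊕ 𝔤^{1,𝔥}`, `ℝ·id ⊕ 𝔤^{2,𝔥}`, `ℝ·id ⊕ 𝔤^{3,𝔥,φ}`, `𝔤^{α,θ,1,𝔥}`,
`𝔤^{θ,2,𝔥}`, `𝔤^{θ,3,𝔥,φ}` (with admissible parameters, and nonzero center
whenever a nonzero `φ` is required) is a weakly irreducible Berger subalgebra
of `co(1,n+1)` not contained in `so(1,n+1)`. -/
theorem realization_families_Berger (n : ℕ) (hn : 1 ≤ n)
    (h : Set (Module.End ℝ (Fin n → ℝ)))
    (hsub : IsLieSub h) (hso : h ⊆ soE n) (hwb : IsWeakBerger n h) :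
    GoodAlg n (G1 n h) ∧
    GoodAlg n (G2 n h) ∧
    (∀ φ : Module.End ℝ (Fin n → ℝ) →ₗ[ℝ] ℝ,
      VanishOnComm h φ → NonzeroOn h φ → CenterNonzero h →
      GoodAlg n (G3 n h φ)) ∧
    (∀ (α : ℝ) (θ : Module.End ℝ (Fin n → ℝ) →ₗ[ℝ] ℝ),
      VanishOnComm h θ → ¬ (α = 0 ∧ ∀ A ∈ h, θ A = 0) →
      GoodAlg n (G4 n h α θ)) ∧
    (∀ θ : Module.End ℝ (Fin n → ℝ) →ₗ[ℝ] ℝ,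
      VanishOnComm h θ → NonzeroOn h θ → GoodAlg n (G5 n h θ)) ∧
    (∀ θ φ : Module.End ℝ (Fin n → ℝ) →ₗ[ℝ] ℝ,
      VanishOnComm h θ → VanishOnComm h φ → NonzeroOn h θ → NonzeroOn h φ →
      CenterNonzero h → GoodAlg n (G6 n h θ φ)) := by
  have hv0 : VanishOnComm h 0 := fun A _ B _ => by simp
  have h0 := hsub.1
  refine ⟨?_, ?_, ?_, ?_, ?_, ?_⟩
  · have := GG_good hn hsub hso hwb ⊤ hv0 hv0 ⟨(1, 0), trivial, 0, h0, by simp⟩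
    convert this using 1
    ext F
    constructor
    · rintro ⟨b, a, A, hA, X, rfl⟩
      exact ⟨(b, a), trivial, A, hA, X, by simp⟩
    · rintro ⟨k, -, A, hA, X, rfl⟩
      exact ⟨k.1, k.2, A, hA, X, by simp⟩
  · have := GG_good hn hsub hso hwb (Submodule.span ℝ {((1 : ℝ), (0 : ℝ))}) hv0 hv0
      ⟨(1, 0), Submodule.mem_span_singleton_self _, 0, h0, by simp⟩
    convert this using 1
    ext F
    constructor
    · rintro ⟨b, A, hA, X, rfl⟩
      exact ⟨(b, 0), Submodule.mem_span_singleton.mpr ⟨b, by simp⟩, A, hA, X, by simp⟩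
    · rintro ⟨k, hk, A, hA, X, rfl⟩
      obtain ⟨b, rfl⟩ := Submodule.mem_span_singleton.mp hk
      exact ⟨b, A, hA, X, by simp⟩
  · intro φ hφ _ _
    have := GG_good hn hsub hso hwb (Submodule.span ℝ {((1 : ℝ), (0 : ℝ))}) hv0 hφ
      ⟨(1, 0), Submodule.mem_span_singleton_self _, 0, h0, by simp⟩
    convert this using 1
    ext F
    constructor
    · rintro ⟨b, A, hA, X, rfl⟩
      exact ⟨(b, 0), Submodule.mem_span_singleton.mpr ⟨b, by simp⟩, A, hA, X, by simp⟩
    · rintro ⟨k, hk, A, hA, X, rfl⟩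
      obtain ⟨b, rfl⟩ := Submodule.mem_span_singleton.mp hk
      exact ⟨b, A, hA, X, by simp⟩
  · intro α θ hθ hne
    have := GG_good hn hsub hso hwb (Submodule.span ℝ {(α, (1 : ℝ))}) hθ hv0 (by
      by_cases hα : α = 0
      · have : ¬ ∀ A ∈ h, θ A = 0 := fun hc => hne ⟨hα, hc⟩
        push Not at this
        obtain ⟨A, hA, hθA⟩ := this
        exact ⟨0, Submodule.zero_mem _, A, hA, by simpa using hθA⟩
      · exact ⟨(α, 1), Submodule.mem_span_singleton_self _, 0, h0, by simpa using hα⟩)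
    convert this using 1
    ext F
    constructor
    · rintro ⟨a, A, hA, X, rfl⟩
      exact ⟨(α * a, a), Submodule.mem_span_singleton.mpr ⟨a, by simp [mul_comm]⟩, A, hA, X,
        by simp [add_comm]⟩
    · rintro ⟨k, hk, A, hA, X, rfl⟩
      obtain ⟨a, rfl⟩ := Submodule.mem_span_singleton.mp hk
      exact ⟨a, A, hA, X, by simp [add_comm, mul_comm]⟩
  · intro θ hθ hne
    obtain ⟨A, hA, hθA⟩ := hne
    have := GG_good hn hsub hso hwb ⊥ hθ hv0
      ⟨0, Submodule.zero_mem _, A, hA, by simpa using hθA⟩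
    convert this using 1
    ext F
    constructor
    · rintro ⟨A, hA, X, rfl⟩
      exact ⟨0, Submodule.zero_mem _, A, hA, X, by simp⟩
    · rintro ⟨k, hk, A, hA, X, rfl⟩
      rw [Submodule.mem_bot] at hk
      subst hk
      exact ⟨A, hA, X, by simp⟩
  · intro θ φ hθ hφ hne _ _
    obtain ⟨A, hA, hθA⟩ := hne
    have := GG_good hn hsub hso hwb ⊥ hθ hφ
      ⟨0, Submodule.zero_mem _, A, hA, by simpa using hθA⟩
    convert this using 1
    ext F
    constructor
    · rintro ⟨A, hA, X, rfl⟩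
      exact ⟨0, Submodule.zero_mem _, A, hA, X, by simp⟩
    · rintro ⟨k, hk, A, hA, X, rfl⟩
      rw [Submodule.mem_bot] at hk
      subst hk
      exact ⟨A, hA, X, by simp⟩

end Weyl
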